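/- arXiv:0805.2572 — 2 statements merged into one kernel-verified Lean document; each statement's English description precedes it below -/
import Mathlib

section
/- Let p be a prime, k an algebraically closed field of characteristic p, F = FractionRing(𝕎 k), and σ : F ≃+* F the automorphism induced by the Witt vector Frobenius. Let E be a finite-dimensional F-vector space and Φ : E → E an additive bijection satisfying Φ(c • v) = σ(c) • Φ(v) for all c ∈ F, v ∈ E. Then every F-subspace D ⊆ E with Φ(D) ⊆ D admits a Φ-stable complement: there is an F-subspace D' ⊆ E with Φ(D') ⊆ D', D ∩ D' = 0, and D + D' = E. -/
open WittVector

/-- Over a ring that is `m`-adically complete for a natural number `m`, an additive map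
that is surjective modulo `m` is surjective. -/
theorem AddMonoidHom.surjective_of_surjective_mod_natCast {R : Type*} [CommRing R] (m : ℕ)
    [IsAdicComplete (Ideal.span {(m : R)}) R] (P : R →+ R)
    (hP : ∀ y, ∃ x, (m : R) ∣ y - P x) : Function.Surjective P := by
  intro y
  choose x z hxz using hP
  have hcomm (n : ℕ) (t : R) : P ((m : R) ^ n * t) = (m : R) ^ n * P t := by
    simpa [nsmul_eq_mul] using map_nsmul P (m ^ n) t
  let s : ℕ → R := fun n => ∑ i ∈ Finset.range n, (m : R) ^ i * x (z^[i] y)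
  have hs (n : ℕ) : y - P (s n) = (m : R) ^ n * z^[n] y := by
    induction n with
    | zero => simp [s]
    | succ n ih =>
      have hsucc : s (n + 1) = s n + (m : R) ^ n * x (z^[n] y) := Finset.sum_range_succ _ _
      rw [hsucc, map_add, hcomm, ← sub_sub, ih, ← mul_sub, hxz, Function.iterate_succ_apply',
        pow_succ, mul_assoc]
  have hmod (n : ℕ) (a b : R) :
      a ≡ b [SMOD (Ideal.span {(m : R)} ^ n • ⊤ : Submodule R R)] ↔ (m : R) ^ n ∣ a - b := by
    rw [SModEq.sub_mem, smul_eq_mul, Ideal.mul_top, Ideal.span_singleton_pow,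
      Ideal.mem_span_singleton]
  obtain ⟨t, ht⟩ := IsPrecomplete.prec (I := Ideal.span {(m : R)}) inferInstance (f := s) (by
    intro a b hab
    rw [hmod, ← dvd_neg, neg_sub]
    obtain ⟨c, rfl⟩ := Nat.exists_eq_add_of_le hab
    simp only [s, Finset.sum_range_add, add_sub_cancel_left]
    exact Finset.dvd_sum fun i _ => (pow_dvd_pow _ (Nat.le_add_right a i)).mul_right _)
  refine ⟨t, sub_eq_zero.mp
    (IsHausdorff.haus (I := Ideal.span {(m : R)}) inferInstance (P t - y) fun n => ?_)⟩
  obtain ⟨c, hc⟩ := (hmod _ _ _).mp (ht n)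
  rw [hmod, sub_zero, ← dvd_neg, neg_sub]
  refine ⟨z^[n] y + P c, ?_⟩
  rw [mul_add, ← hs, ← hcomm, ← hc, map_sub]
  ring

/-- A nonzero additive polynomial over an algebraically closed field is surjective. -/
theorem IsAlgClosed.exists_sum_mul_pow_pow_eq {k : Type*} [Field k] [IsAlgClosed k] {p : ℕ}
    (hp : 1 < p) {ι : Type*} [Fintype ι] {e : ι → ℕ} (he : Function.Injective e) {a : ι → k}
    {j : ι} (hj : a j ≠ 0) (y : k) : ∃ x, ∑ i, a i * x ^ p ^ e i = y := by
  classical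
  let Q : Polynomial k :=
    ∑ i, Polynomial.C (a i) * Polynomial.X ^ p ^ e i - Polynomial.C y
  have hpos : p ^ e j ≠ 0 := pow_ne_zero _ (by lia)
  have hQ : Q.coeff (p ^ e j) = a j := by
    simp only [Q, Polynomial.coeff_sub, Polynomial.finsetSum_coeff, Polynomial.coeff_C_mul_X_pow,
      Polynomial.coeff_C, if_neg hpos, sub_zero, (Nat.pow_right_injective hp).eq_iff, he.eq_iff]
    simp
  obtain ⟨x, hx⟩ := IsAlgClosed.exists_root Q fun h => hj <| by
    rw [← hQ, Polynomial.coeff_eq_zero_of_degree_lt]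
    rw [h]
    exact_mod_cast Nat.pos_of_ne_zero hpos
  refine ⟨x, sub_eq_zero.mp ?_⟩
  simpa [Q, Polynomial.IsRoot, Polynomial.eval_finsetSum] using hx

namespace WittVector

variable {p : ℕ} [Fact p.Prime] {k : Type*} [Field k] [CharP k p] [IsAlgClosed k]

/-- A Frobenius-twisted polynomial with some coefficient a unit is surjective on `𝕎 k`. -/
theorem exists_sum_mul_iterate_frobenius_eq {ι : Type*} [Fintype ι] {e : ι → ℕ}
    (he : Function.Injective e) {a : ι → WittVector p k} {j : ι} (hj : (a j).coeff 0 ≠ 0)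
    (y : WittVector p k) :
    ∃ x, ∑ i, a i * (WittVector.frobenius : WittVector p k →+* WittVector p k)^[e i] x = y := by
  let P : WittVector p k →+ WittVector p k :=
    ∑ i, (AddMonoidHom.mulLeft (a i)).comp
      ((WittVector.frobenius : WittVector p k →+* WittVector p k) ^ e i).toAddMonoidHom
  have hPx (x) :
      P x = ∑ i, a i * (WittVector.frobenius : WittVector p k →+* WittVector p k)^[e i] x := by
    simp [P, AddMonoidHom.finsetSum_apply, RingHom.coe_pow]
  obtain ⟨x, hx⟩ := P.surjective_of_surjective_mod_natCast p (fun y => by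
    obtain ⟨x, hx⟩ := IsAlgClosed.exists_sum_mul_pow_pow_eq (Fact.out : p.Prime).one_lt he
      (a := fun i => (a i).coeff 0) hj (y.coeff 0)
    refine ⟨teichmuller p x, ?_⟩
    rw [← Ideal.mem_span_singleton, mem_span_p_iff_coeff_zero_eq_zero, ← constantCoeff_apply,
      map_sub, hPx, map_sum, sub_eq_zero, constantCoeff_apply, ← hx]
    simp [mul_coeff_zero, iterate_frobenius_coeff]) y
  exact ⟨x, (hPx x).symm.trans hx⟩

theorem FractionRing.iterate_frobenius_algebraMap (n : ℕ) (x : WittVector p k) :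
    (FractionRing.frobenius p k)^[n] (algebraMap _ (FractionRing (WittVector p k)) x) =
      algebraMap _ _ ((WittVector.frobenius : WittVector p k →+* WittVector p k)^[n] x) := by
  induction n with
  | zero => rfl
  | succ n ih =>
    rw [Function.iterate_succ_apply', ih, Function.iterate_succ_apply', FractionRing.frobenius,
      IsFractionRing.ringEquivOfRingEquiv_algebraMap, frobeniusEquiv_apply]

/-- A nonzero Frobenius-twisted polynomial is surjective on the fraction field of `𝕎 k`. -/
theorem FractionRing.exists_sum_mul_iterate_frobenius_eq {ι : Type*} [Fintype ι] {e : ι → ℕ}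
    (he : Function.Injective e) {b : ι → FractionRing (WittVector p k)} (hb : b ≠ 0)
    (y : FractionRing (WittVector p k)) :
    ∃ x, ∑ i, b i * (FractionRing.frobenius p k)^[e i] x = y := by
  let v := ValuationRing.valuation (WittVector p k) (FractionRing (WittVector p k))
  obtain ⟨i₀, hi₀⟩ := Function.ne_iff.mp hb
  obtain ⟨j, -, hj⟩ := Finset.exists_max_image Finset.univ (fun i => v (b i))
    ⟨i₀, Finset.mem_univ _⟩
  have hbj : b j ≠ 0 := fun h => hi₀ <| by
    simpa [h] using hj i₀ (Finset.mem_univ _)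
  have hinteger (i) : ∃ a : WittVector p k, algebraMap _ _ a = b i / b j := by
    rw [← ValuationRing.mem_integer_iff, Valuation.mem_integer_iff, map_div₀]
    exact div_le_one_of_le₀ (hj i (Finset.mem_univ _)) zero_le
  choose a ha using hinteger
  have haj : a j = 1 := IsFractionRing.injective (WittVector p k) (FractionRing (WittVector p k))
    (by rw [ha, div_self hbj, map_one])
  obtain ⟨u, d, hd, hud⟩ := IsFractionRing.div_surjective (A := WittVector p k) (y / b j)
  obtain ⟨m, d', rfl⟩ := exists_eq_pow_p_mul' d (nonZeroDivisors.ne_zero hd)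
  obtain ⟨x, hx⟩ := WittVector.exists_sum_mul_iterate_frobenius_eq he
    (a := a) (j := j) (by simp [haj]) (u * ↑d'⁻¹)
  have hp0 : (p : FractionRing (WittVector p k)) ≠ 0 := FractionRing.p_nonzero p k
  refine ⟨algebraMap _ _ x / (p : FractionRing (WittVector p k)) ^ m, ?_⟩
  have hterm (i) : b i * (FractionRing.frobenius p k)^[e i]
      (algebraMap _ _ x / (p : FractionRing (WittVector p k)) ^ m) =
      b j / (p : FractionRing (WittVector p k)) ^ m * algebraMap _ _ (a i *
        (WittVector.frobenius : WittVector p k →+* WittVector p k)^[e i] x) := by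
    rw [div_eq_mul_inv, iterate_map_mul,
      Function.iterate_fixed (x := ((p : FractionRing (WittVector p k)) ^ m)⁻¹) (by simp),
      FractionRing.iterate_frobenius_algebraMap, map_mul, ha]
    field_simp
  rw [Finset.sum_congr rfl fun i _ => hterm i, ← Finset.mul_sum, ← map_sum, hx]
  have hd' : algebraMap _ (FractionRing (WittVector p k)) (d' : WittVector p k) *
      algebraMap _ _ (↑d'⁻¹ : WittVector p k) = 1 := by
    rw [← map_mul, Units.mul_inv, map_one]
  rw [eq_div_iff hbj] at hud
  rw [← hud, map_mul, map_mul, map_pow, map_natCast]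
  have := left_ne_zero_of_mul_eq_one hd'
  field_simp
  linear_combination (algebraMap _ (FractionRing (WittVector p k)) u) * hd'

end WittVector

section Semilinear

variable {F V : Type*} [Field F] [AddCommGroup V] [Module F V]

theorem iterate_map_smul_of_semilinear {σ : F → F} {Φ : V → V}
    (hΦ : ∀ (c : F) (v : V), Φ (c • v) = σ c • Φ v) (n : ℕ) (c : F) (v : V) :
    Φ^[n] (c • v) = σ^[n] c • Φ^[n] v := by
  induction n generalizing c v with
  | zero => rfl
  | succ n ih => simp only [Function.iterate_succ_apply, hΦ, ih]

/-- A stable subspace of a finite-dimensional space with a bijective semilinear map is also stable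
under the inverse. -/
theorem Submodule.symm_mem_of_semilinear_stable [FiniteDimensional F V] (σ : F → F) (Φ : V ≃+ V)
    (hΦ : ∀ (c : F) (v : V), Φ (c • v) = σ c • Φ v) {D : Submodule F V}
    (hD : ∀ v ∈ D, Φ v ∈ D) {v : V} (hv : v ∈ D) : Φ.symm v ∈ D := by
  let preimage : ℕ →o Submodule F V :=
    { toFun n :=
        { carrier := {v | Φ^[n] v ∈ D}
          add_mem' {a b} ha hb := by
            simpa only [Set.mem_ofPred_eq, iterate_map_add] using D.add_mem ha hb
          zero_mem' := by simp [iterate_map_zero]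
          smul_mem' c v hv := by
            simpa only [Set.mem_ofPred_eq, iterate_map_smul_of_semilinear hΦ] using
              D.smul_mem _ hv }
      monotone' := monotone_nat_of_le_succ fun n v hv => by
        simpa [Function.iterate_succ_apply'] using hD _ hv }
  obtain ⟨n, hn⟩ := monotone_stabilizes_iff_noetherian.mpr (inferInstance : IsNoetherian F V)
    preimage
  obtain ⟨w, hw⟩ := Φ.surjective.iterate n (Φ.symm v)
  rw [← hw]
  change w ∈ preimage n
  rw [hn (n + 1) n.le_succ]
  change Φ^[n + 1] w ∈ D
  rwa [Function.iterate_succ_apply', hw, Φ.apply_symm_apply]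

end Semilinear

namespace WittVector

variable {p : ℕ} [Fact p.Prime] {k : Type*} [Field k] [CharP k p] [IsAlgClosed k]

/-- For a Frobenius-semilinear map `Φ` of a finite-dimensional space, `Φ - 1` is surjective on
every `Φ`-stable subspace. -/
theorem FractionRing.exists_map_sub_eq_of_semilinear {V : Type*} [AddCommGroup V]
    [Module (FractionRing (WittVector p k)) V] [FiniteDimensional (FractionRing (WittVector p k)) V]
    (Φ : V →+ V)
    (hΦ : ∀ (c : FractionRing (WittVector p k)) (v : V),
      Φ (c • v) = FractionRing.frobenius p k c • Φ v)
    (S : Submodule (FractionRing (WittVector p k)) V) (hS : ∀ v ∈ S, Φ v ∈ S) {y : V}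
    (hy : y ∈ S) : ∃ x ∈ S, Φ x - x = y := by
  let σ := FractionRing.frobenius p k
  let n := Module.finrank (FractionRing (WittVector p k)) V
  have hdep : ¬ LinearIndependent (FractionRing (WittVector p k))
      (fun i : Fin (n + 1) => Φ^[i] y) := fun h => by
    simpa [n] using h.fintype_card_le_finrank
  obtain ⟨c, hc, i₀, hi₀⟩ := Fintype.not_linearIndependent_iff.mp hdep
  have hright (i : ℕ) : Function.RightInverse σ.symm^[i] σ^[i] :=
    Function.RightInverse.iterate σ.apply_symm_apply i
  obtain ⟨w, hw⟩ := FractionRing.exists_sum_mul_iterate_frobenius_eq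
    (e := fun i : Fin (n + 1) => n - i) (fun i j hij => Fin.ext (by dsimp at hij; lia))
    (b := fun i => σ.symm^[i] (c i))
    (Function.ne_iff.mpr ⟨i₀, fun h => hi₀ <| by
      rw [← hright i₀ (c i₀), h]; exact iterate_map_zero σ _⟩) 1
  let I : AddSubgroup V := S.toAddSubgroup.map (Φ - AddMonoidHom.id V)
  have hiter (i : ℕ) (v : V) (hv : v ∈ S) : Φ^[i] v ∈ S ∧ Φ^[i] v - v ∈ I := by
    induction i with
    | zero => exact ⟨hv, by simp⟩
    | succ i ih =>
      rw [Function.iterate_succ_apply']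
      refine ⟨hS _ ih.1, ?_⟩
      rw [← sub_add_sub_cancel _ (Φ^[i] v) v]
      exact I.add_mem ⟨_, ih.1, rfl⟩ ih.2
  have hterm (i : Fin (n + 1)) :
      Φ^[i] ((σ.symm^[i] (c i) * σ^[n - i] w) • y) = σ^[n] w • c i • Φ^[i] y := by
    rw [iterate_map_smul_of_semilinear hΦ]
    change σ^[i] _ • _ = _
    rw [iterate_map_mul, hright, ← Function.iterate_add_apply, Nat.add_sub_cancel' (by lia),
      smul_smul, mul_comm]
  have hsum : ∑ i : Fin (n + 1), (Φ^[i] ((σ.symm^[i] (c i) * σ^[n - i] w) • y) -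
      (σ.symm^[i] (c i) * σ^[n - i] w) • y) ∈ I :=
    I.sum_mem fun i _ => (hiter i _ (S.smul_mem _ hy)).2
  rw [Finset.sum_sub_distrib, Finset.sum_congr rfl fun i _ => hterm i, ← Finset.smul_sum, hc,
    smul_zero, ← Finset.sum_smul, hw, one_smul, zero_sub, I.neg_mem_iff] at hsum
  obtain ⟨x, hx, hxy⟩ := hsum
  exact ⟨x, hx, hxy⟩

end WittVector

/-- **Semisimplicity of `φ`-modules over an algebraically closed residue field.**
If `k` is algebraically closed of characteristic `p`, `F = FractionRing (𝕎 k)`, `σ` the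
automorphism of `F` induced by the Witt vector Frobenius, `E` a finite-dimensional
`F`-vector space with an additive bijection `Φ` satisfying `Φ (c • v) = σ c • Φ v`, then
every `Φ`-stable subspace `D ⊆ E` admits a `Φ`-stable complement. -/
theorem phi_module_stable_complement
    (p : ℕ) [Fact p.Prime] (k : Type*) [Field k] [CharP k p] [IsAlgClosed k]
    (σ : FractionRing (WittVector p k) ≃+* FractionRing (WittVector p k))
    (hσ : σ = WittVector.FractionRing.frobenius p k)
    (E : Type*) [AddCommGroup E] [Module (FractionRing (WittVector p k)) E]
    [FiniteDimensional (FractionRing (WittVector p k)) E]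
    (Φ : E ≃+ E)
    (hΦ : ∀ (c : FractionRing (WittVector p k)) (v : E), Φ (c • v) = σ c • Φ v)
    (D : Submodule (FractionRing (WittVector p k)) E)
    (hD : ∀ v ∈ D, Φ v ∈ D) :
    ∃ D' : Submodule (FractionRing (WittVector p k)) E,
      (∀ v ∈ D', Φ v ∈ D') ∧ D ⊓ D' = ⊥ ∧ D ⊔ D' = ⊤ := by
  subst hσ
  let F := FractionRing (WittVector p k)
  let σ := FractionRing.frobenius p k
  have hsymm (c : F) (v : E) : Φ.symm (σ c • v) = c • Φ.symm v := by
    rw [AddEquiv.symm_apply_eq, hΦ, Φ.apply_symm_apply]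
  have hDsymm {v : E} (hv : v ∈ D) : Φ.symm v ∈ D :=
    D.symm_mem_of_semilinear_stable σ Φ hΦ hD hv
  -- Conjugation by `Φ` is a Frobenius-semilinear map of `End E`.
  let Ψ : (E →ₗ[F] E) →+ (E →ₗ[F] E) :=
    { toFun f :=
        { toFun v := Φ (f (Φ.symm v))
          map_add' := by simp
          map_smul' c v := by
            obtain ⟨c, rfl⟩ := σ.surjective c
            rw [hsymm, map_smul, hΦ]
            rfl }
      map_zero' := by ext; simp
      map_add' f g := by ext; simp }
  have hΨ (f : E →ₗ[F] E) (v : E) : Ψ f v = Φ (f (Φ.symm v)) := rfl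
  let S : Submodule F (E →ₗ[F] E) :=
    { carrier := {f | (∀ v, f v ∈ D) ∧ ∀ v ∈ D, f v = 0}
      add_mem' {f g} hf hg :=
        ⟨fun v => D.add_mem (hf.1 v) (hg.1 v), fun v hv => by simp [hf.2 v hv, hg.2 v hv]⟩
      zero_mem' := by simp
      smul_mem' c f hf := ⟨fun v => D.smul_mem c (hf.1 v), fun v hv => by simp [hf.2 v hv]⟩ }
  have hS (f) (hf : f ∈ S) : Ψ f ∈ S :=
    ⟨fun v => hD _ (hf.1 _), fun v hv => by rw [hΨ, hf.2 _ (hDsymm hv), map_zero]⟩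
  obtain ⟨q, hq⟩ := D.subtype.exists_leftInverse_of_injective D.ker_subtype
  let π : E →ₗ[F] E := D.subtype ∘ₗ q
  have hπD (v) : π v ∈ D := (q v).2
  have hπ (v) (hv : v ∈ D) : π v = v := congrArg Subtype.val (LinearMap.congr_fun hq ⟨v, hv⟩)
  have hδ : π - Ψ π ∈ S :=
    ⟨fun v => D.sub_mem (hπD v) (hD _ (hπD _)), fun v hv => by
      simp [hΨ, hπ v hv, hπ _ (hDsymm hv)]⟩
  obtain ⟨f, hf, hfδ⟩ := FractionRing.exists_map_sub_eq_of_semilinear Ψ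
    (fun c f => by ext v; simp only [hΨ, LinearMap.smul_apply, hΦ]) S hS hδ
  -- The corrected projection onto `D` commutes with `Φ`, so its kernel is the complement.
  let g := π + f
  have hg : Ψ g = g := by
    rw [map_add, ← sub_eq_zero, add_sub_add_comm, hfδ, sub_add_sub_cancel, sub_self]
  have hgD (v) : g v ∈ D := D.add_mem (hπD v) (hf.1 v)
  have hgid (v) (hv : v ∈ D) : g v = v := by simp [g, hπ v hv, hf.2 v hv]
  refine ⟨LinearMap.ker g, fun v hv => ?_, ?_, ?_⟩
  · rw [LinearMap.mem_ker, ← hg, hΨ, Φ.symm_apply_apply, LinearMap.mem_ker.mp hv, map_zero]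
  · rw [eq_bot_iff]
    rintro v ⟨hvD, hv⟩
    rw [Submodule.mem_bot, ← hgid v hvD]
    exact hv
  · rw [eq_top_iff]
    intro v _
    refine Submodule.mem_sup.mpr ⟨g v, hgD v, v - g v, ?_, add_sub_cancel _ _⟩
    rw [LinearMap.mem_ker, map_sub, hgid _ (hgD v), sub_self]
end

section
/- Let p be a prime, k an algebraically closed field of characteristic p, F = FractionRing(𝕎 k), and σ : F ≃+* F the automorphism induced by the Witt vector Frobenius. Let E be a finite-dimensional F-vector space, Φ : E → E an additive bijection satisfying Φ(c • v) = σ(c) • Φ(v) for all c ∈ F, v ∈ E, and N : E → E an F-linear map satisfying N ∘ Φ = p • (Φ ∘ N). Suppose D ⊆ E is an F-subspace with Φ(D) ⊆ D such that: (i) N vanishes on D; (ii) the quotient E/D is one-dimensional and is spanned by a vector fixed by the map induced by Φ on E/D; and (iii) the only v ∈ D with p • Φ(v) = v is v = 0. Then N = 0 on all of E. -/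
open WittVector

/-- The Frobenius of `FractionRing (𝕎 k)` preserves the `p`-adic valuation, so no nonzero element
is multiplied by `p⁻¹` under it. -/
theorem WittVector.FractionRing.eq_zero_of_p_mul_frobenius_eq_self
    (p : ℕ) [Fact p.Prime] {k : Type*} [Field k] [CharP k p] [PerfectRing k p]
    {c : FractionRing (WittVector p k)}
    (h : (p : FractionRing (WittVector p k)) * WittVector.FractionRing.frobenius p k c = c) :
    c = 0 := by
  obtain ⟨a, b, hb, rfl⟩ := IsFractionRing.div_surjective (A := WittVector p k) c
  have hb0 : b ≠ 0 := nonZeroDivisors.ne_zero hb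
  by_contra hc
  have ha0 : a ≠ 0 := by
    rintro rfl
    simp at hc
  have hp : Prime (p : WittVector p k) := (WittVector.irreducible p).prime
  have hfrob : ∀ x : WittVector p k, WittVector.FractionRing.frobenius p k
      (algebraMap _ (FractionRing (WittVector p k)) x) =
        algebraMap _ _ (WittVector.frobeniusEquiv p k x) := fun x =>
    IsFractionRing.ringEquivOfRingEquiv_algebraMap _ _
  have hinj := IsFractionRing.injective (WittVector p k) (FractionRing (WittVector p k))
  have hmul : (p : WittVector p k) * (WittVector.frobeniusEquiv p k a * b) =
      a * WittVector.frobeniusEquiv p k b := by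
    apply hinj
    rw [map_div₀, hfrob, hfrob, ← mul_div_assoc, div_eq_div_iff] at h
    · simpa [mul_assoc] using h
    · rwa [ne_eq, _root_.map_eq_zero_iff _ hinj, EmbeddingLike.map_eq_zero_iff]
    · rwa [ne_eq, _root_.map_eq_zero_iff _ hinj]
  have hval : ∀ x, emultiplicity (p : WittVector p k) (WittVector.frobeniusEquiv p k x) =
      emultiplicity (p : WittVector p k) x := fun x => by
    simpa using emultiplicity_map_eq (WittVector.frobeniusEquiv p k) (a := (p : WittVector p k))
      (b := x)
  have hfa := FiniteMultiplicity.of_prime_left hp ha0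
  have hfb := FiniteMultiplicity.of_prime_left hp hb0
  have hfp := FiniteMultiplicity.of_prime_left hp hp.ne_zero
  have hmult := congrArg (emultiplicity (p : WittVector p k)) hmul
  rw [emultiplicity_mul hp, emultiplicity_mul hp, emultiplicity_mul hp, hval, hval,
    hfp.emultiplicity_self, hfa.emultiplicity_eq_multiplicity,
    hfb.emultiplicity_eq_multiplicity] at hmult
  norm_cast at hmult
  lia

/-- Crux of Theorem 3.1(2): over an algebraically closed residue field, a semistable
`(φ,N)`-module extension of the unit object by a crystalline module `D` with no `φ`-slope
equal to `−1` is crystalline. Concretely: with `F = FractionRing (𝕎 k)`, `σ` induced by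
the Witt vector Frobenius, `Φ` a `σ`-semilinear additive bijection of a finite-dimensional
`F`-vector space `E` and `N` `F`-linear with `N ∘ Φ = p • (Φ ∘ N)`, if `D ⊆ E` is a
`Φ`-stable subspace on which `N` vanishes, whose quotient is one-dimensional and spanned
by a `Φ`-fixed vector, and `D` contains no nonzero `v` with `p • Φ v = v`, then `N = 0`. -/
theorem monodromy_vanishes_on_semistable_extension
    (p : ℕ) [Fact p.Prime] (k : Type*) [Field k] [CharP k p] [IsAlgClosed k]
    (σ : FractionRing (WittVector p k) ≃+* FractionRing (WittVector p k))
    (hσ : σ = WittVector.FractionRing.frobenius p k)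
    (E : Type*) [AddCommGroup E] [Module (FractionRing (WittVector p k)) E]
    [FiniteDimensional (FractionRing (WittVector p k)) E]
    (Φ : E ≃+ E)
    (hΦ : ∀ (c : FractionRing (WittVector p k)) (v : E), Φ (c • v) = σ c • Φ v)
    (N : E →ₗ[FractionRing (WittVector p k)] E)
    (hN : ∀ v : E, N (Φ v) = (p : FractionRing (WittVector p k)) • Φ (N v))
    (D : Submodule (FractionRing (WittVector p k)) E)
    (hD : ∀ v ∈ D, Φ v ∈ D)
    (hNvanish : ∀ v ∈ D, N v = 0)
    (hquot : Module.finrank (FractionRing (WittVector p k)) (E ⧸ D) = 1)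
    (hspan : ∃ v : E, v ∉ D ∧ Φ v - v ∈ D)
    (hslope : ∀ v ∈ D, (p : FractionRing (WittVector p k)) • Φ v = v → v = 0) :
    N = 0 := by
  subst hσ
  obtain ⟨v, hvD, hv⟩ := hspan
  have hdecomp : ∀ w : E, ∃ c : FractionRing (WittVector p k), w - c • v ∈ D := fun w => by
    have hv0 : D.mkQ v ≠ 0 := by simpa using hvD
    obtain ⟨c, hc⟩ := (finrank_eq_one_iff_of_nonzero' _ hv0).1 hquot (D.mkQ w)
    refine ⟨c, ?_⟩
    rw [← Submodule.ker_mkQ D, LinearMap.mem_ker, map_sub, map_smul, hc, sub_self]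
  have hfix : (p : FractionRing (WittVector p k)) • Φ (N v) = N v := by
    rw [← hN, ← sub_eq_zero, ← map_sub]
    exact hNvanish _ hv
  have hmem : N v ∈ D := by
    obtain ⟨c, hc⟩ := hdecomp (N v)
    have hdiff : ((p : FractionRing (WittVector p k)) * FractionRing.frobenius p k c - c) • v
        ∈ D := by
      have h₁ := D.smul_mem (p : FractionRing (WittVector p k)) (hD _ hc)
      have h₂ := D.smul_mem ((p : FractionRing (WittVector p k)) *
        FractionRing.frobenius p k c) hv
      rw [map_sub, hΦ, smul_sub, hfix] at h₁
      convert D.sub_mem (D.sub_mem hc h₁) h₂ using 1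
      simp only [smul_sub, sub_smul, mul_smul]
      abel
    have hc0 : c = 0 := by
      apply FractionRing.eq_zero_of_p_mul_frobenius_eq_self p
      by_contra hne
      exact hvD ((D.smul_mem_iff (sub_ne_zero.2 hne)).1 hdiff)
    simpa [hc0] using hc
  have hNv : N v = 0 := hslope _ hmem hfix
  ext w
  obtain ⟨c, hc⟩ := hdecomp w
  simpa [hNv] using hNvanish _ hc
end
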